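/- Let (X, A_X) be an arbitrary network with n ≥ 2 nodes, let β = mlc(X, A_X) be its minimum loop cost, and let α be any constant with 0 < α ≤ sep(X, A_X). Then there exists a bijective map φ : X → {1,…,n} that is dissimilarity reducing into the canonical network Δ_n(α,β) = ({1,…,n}, A_{n,α,β}): A_X(x, x') ≥ A_{n,α,β}(φ(x), φ(x')) for all x, x' ∈ X, where A_{n,α,β}(i,j) = α for i > j, A_{n,α,β}(i,j) = β for i < j, and A_{n,α,β}(i,i) = 0. -/

import Mathlib

noncomputable section

/-- A dissimilarity function on a node set: nonnegative and zero exactly on the diagonal.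
It need not be symmetric nor satisfy the triangle inequality. -/
def IsDissim {X : Type} (A : X → X → ℝ) : Prop :=
  (∀ x x', 0 ≤ A x x') ∧ (∀ x x', A x x' = 0 ↔ x = x')

/-- A symmetric dissimilarity. -/
def IsSym {X : Type} (A : X → X → ℝ) : Prop := ∀ x x', A x x' = A x' x

/-- An ultrametric: nonnegative, zero exactly on the diagonal, symmetric, and
satisfying the strong triangle inequality. -/
def IsUltrametric {X : Type} (u : X → X → ℝ) : Prop :=
  (∀ x x', 0 ≤ u x x') ∧ (∀ x x', u x x' = 0 ↔ x = x') ∧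
    (∀ x x', u x x' = u x' x) ∧
    (∀ x x' x'', u x x'' ≤ max (u x x') (u x' x''))

/-- The cost of the chain `x :: l`: the maximum dissimilarity over consecutive links. -/
def chainCost {X : Type} (A : X → X → ℝ) : X → List X → ℝ
  | _, [] => 0
  | x, y :: l => max (A x y) (chainCost A y l)

/-- The set of costs of chains from `x` to `x'`. -/
def chainCosts {X : Type} (A : X → X → ℝ) (x x' : X) : Set ℝ :=
  {c | ∃ l : List X, (x :: l).getLast (List.cons_ne_nil x l) = x' ∧ chainCost A x l = c}

/-- The directed minimum chain cost `ũ*_X(x,x')`: minimum cost over all chains from `x` to `x'`. -/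
def minChainCost {X : Type} (A : X → X → ℝ) (x x' : X) : ℝ :=
  sInf (chainCosts A x x')

/-- The nonreciprocal ultrametric `u^NR`. -/
def nonrecipUltra {X : Type} (A : X → X → ℝ) (x x' : X) : ℝ :=
  max (minChainCost A x x') (minChainCost A x' x)

/-- The reciprocal ultrametric `u^R`. -/
def recipUltra {X : Type} (A : X → X → ℝ) (x x' : X) : ℝ :=
  minChainCost (fun a b => max (A a b) (A b a)) x x'

/-- The unilateral ultrametric `u^U`. -/
def uniUltra {X : Type} (A : X → X → ℝ) (x x' : X) : ℝ :=
  minChainCost (fun a b => min (A a b) (A b a)) x x'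

/-- The minimum loop cost `mlc(X, A_X)`: minimum cost over loops, i.e. chains from some
node `x` back to itself containing at least one node different from `x`. -/
def mlc {X : Type} (A : X → X → ℝ) : ℝ :=
  sInf {c | ∃ (x : X) (l : List X),
    (x :: l).getLast (List.cons_ne_nil x l) = x ∧ (∃ y ∈ l, y ≠ x) ∧ chainCost A x l = c}

/-- The separation `sep(X, A_X)`: minimum dissimilarity over pairs of distinct nodes. -/
def sep {X : Type} (A : X → X → ℝ) : ℝ :=
  sInf {c | ∃ x x' : X, x ≠ x' ∧ A x x' = c}

/-- A hierarchical clustering method: assigns to every (finite) network an output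
two-variable function on the same node set. -/
abbrev HCMethod := ∀ (X : Type) [Fintype X], (X → X → ℝ) → X → X → ℝ

/-- A hierarchical clustering method outputs an ultrametric on every network. -/
def IsHCMethod (H : HCMethod) : Prop :=
  ∀ (X : Type) [Fintype X] (A : X → X → ℝ), IsDissim A → IsUltrametric (H X A)

/-- `p, q` are the two (distinct) nodes of a two-node set. -/
def TwoNode {X : Type} (p q : X) : Prop := p ≠ q ∧ ∀ x : X, x = p ∨ x = q

/-- Axiom of Value (A1): on every two-node network the output clusters the two nodes at
the maximum of the two dissimilarities. -/
def AxiomValue (H : HCMethod) : Prop :=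
  ∀ (X : Type) [Fintype X] (p q : X), TwoNode p q →
    ∀ A : X → X → ℝ, IsDissim A → H X A p q = max (A p q) (A q p)

/-- Axiom of Transformation (A2): dissimilarity-reducing maps do not increase output values. -/
def AxiomTransform (H : HCMethod) : Prop :=
  ∀ (X Y : Type) [Fintype X] [Fintype Y] (AX : X → X → ℝ) (AY : Y → Y → ℝ),
    IsDissim AX → IsDissim AY →
    ∀ φ : X → Y, (∀ x x', AY (φ x) (φ x') ≤ AX x x') →
    ∀ x x' : X, H Y AY (φ x) (φ x') ≤ H X AX x x'

/-- The canonical dissimilarity `A_{n,α,β}` on `Fin n`: `α` for `i > j`, `β` for `i < j`,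
`0` on the diagonal. -/
def canonDissim (n : ℕ) (α β : ℝ) : Fin n → Fin n → ℝ :=
  fun i j => if i = j then 0 else if j < i then α else β

/-- Extended Axiom of Value (A1'): on every permuted canonical network `Δ_n(α,β,Π)` the
output ultrametric equals `max(α,β)` off the diagonal. -/
def ExtAxiomValue (H : HCMethod) : Prop :=
  ∀ (n : ℕ) (α β : ℝ), 0 < α → 0 < β → ∀ π : Equiv.Perm (Fin n),
    ∀ i j : Fin n, i ≠ j →
      H (Fin n) (fun i j => canonDissim n α β (π i) (π j)) i j = max α β

/-- Alternative Axiom of Value (A1''): on every two-node network the output clusters the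
two nodes at the minimum of the two dissimilarities. -/
def AltAxiomValue (H : HCMethod) : Prop :=
  ∀ (X : Type) [Fintype X] (p q : X), TwoNode p q →
    ∀ A : X → X → ℝ, IsDissim A → H X A p q = min (A p q) (A q p)

/-- Agnostic Axiom of Value (A1'''): on every two-node network the output value lies
between the minimum and maximum of the two dissimilarities. -/
def AgnAxiomValue (H : HCMethod) : Prop :=
  ∀ (X : Type) [Fintype X] (p q : X), TwoNode p q →
    ∀ A : X → X → ℝ, IsDissim A →
      min (A p q) (A q p) ≤ H X A p q ∧ H X A p q ≤ max (A p q) (A q p)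

/-!
Put `β = mlc A`. Links between distinct nodes of dissimilarity less than `β` form no directed cycle,
since such a cycle would be a loop of cost less than `β`. Hence the nodes can be numbered so that
every link from a lower to a higher number has dissimilarity at least `β`; the other links between
distinct nodes have dissimilarity at least `sep A`.
-/

section TopologicalSort

variable {X : Type*} {r : X → X → Prop}

theorem exists_linearOrder_lt_of_forall_not_transGen (hr : ∀ x, ¬ Relation.TransGen r x x) :
    ∃ _ : LinearOrder X, ∀ x y, r x y → x < y := by
  have : IsStrictOrder X (Relation.TransGen r) :=
    { irrefl := hr, trans := fun _ _ _ => Relation.TransGen.trans }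
  let _ : PartialOrder X := partialOrderOfSO (Relation.TransGen r)
  have toLinearExtension_strictMono : StrictMono (toLinearExtension (α := X)) :=
    toLinearExtension.monotone.strictMono_of_injective fun _ _ h => h
  exact ⟨inferInstanceAs (LinearOrder (LinearExtension X)), fun _ _ h =>
    toLinearExtension_strictMono (Relation.TransGen.single h)⟩

theorem exists_equiv_fin_lt_of_forall_not_transGen [Fintype X]
    (hr : ∀ x, ¬ Relation.TransGen r x x) :
    ∃ φ : X ≃ Fin (Fintype.card X), ∀ x y, r x y → φ x < φ y := by
  obtain ⟨_, r_lt⟩ := exists_linearOrder_lt_of_forall_not_transGen hr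
  let e : X ≃o Fin (Fintype.card X) := (Fintype.orderIsoFinOfCardEq X rfl).symm
  exact ⟨e.toEquiv, fun x y hxy => e.strictMono (r_lt x y hxy)⟩

end TopologicalSort

section LoopCost

variable {X : Type} {A : X → X → ℝ}

theorem chainCost_nonneg (A : X → X → ℝ) (x : X) (l : List X) : 0 ≤ chainCost A x l := by
  cases l with
  | nil => exact le_rfl
  | cons y l => exact (chainCost_nonneg A y l).trans (le_max_right _ _)

theorem chainCost_lt_iff_isChain {β : ℝ} (hβ : 0 < β) {x : X} {l : List X} :
    chainCost A x l < β ↔ (x :: l).IsChain (A · · < β) := by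
  induction l generalizing x with
  | nil => simpa [chainCost] using hβ
  | cons y l ih => simp [chainCost, ih]

theorem mlc_le_chainCost {x : X} {l : List X}
    (hlast : (x :: l).getLast (List.cons_ne_nil x l) = x) (hne : ∃ y ∈ l, y ≠ x) :
    mlc A ≤ chainCost A x l := by
  refine csInf_le ⟨0, ?_⟩ ⟨x, l, hlast, hne, rfl⟩
  rintro _ ⟨y, m, -, -, rfl⟩
  exact chainCost_nonneg A y m

theorem sep_le (hA : ∀ x x', 0 ≤ A x x') {x x' : X} (hne : x ≠ x') : sep A ≤ A x x' := by
  refine csInf_le ⟨0, ?_⟩ ⟨x, x', hne, rfl⟩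
  rintro _ ⟨y, y', -, rfl⟩
  exact hA y y'

theorem not_transGen_ne_and_lt_mlc (hA : ∀ x x', 0 ≤ A x x') (x : X) :
    ¬ Relation.TransGen (fun a b => a ≠ b ∧ A a b < mlc A) x x := by
  intro hcycle
  obtain ⟨y, ⟨hxy, hlt⟩, hyx⟩ := Relation.TransGen.head'_iff.1 hcycle
  obtain ⟨l, hchain, hlast⟩ := List.exists_isChain_cons_of_relationReflTransGen hyx
  have loop_isChain : (x :: y :: l).IsChain (A · · < mlc A) :=
    .cons_cons hlt (hchain.imp fun _ _ h => h.2)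
  have loop_cost_lt : chainCost A x (y :: l) < mlc A :=
    (chainCost_lt_iff_isChain ((hA x y).trans_lt hlt)).2 loop_isChain
  exact loop_cost_lt.not_ge (mlc_le_chainCost hlast ⟨y, List.mem_cons_self, hxy.symm⟩)

end LoopCost

theorem exists_bijective_dissimilarity_reducing_to_canonical_general
    {X : Type} [Fintype X] {A : X → X → ℝ} (hA : ∀ x x', 0 ≤ A x x')
    {α : ℝ} (hαsep : α ≤ sep A) :
    ∃ φ : X → Fin (Fintype.card X), Function.Bijective φ ∧
      ∀ x x' : X, canonDissim (Fintype.card X) α (mlc A) (φ x) (φ x') ≤ A x x' := by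
  -- Cheap links must point down the numbering, so it sorts the reversed relation.
  obtain ⟨φ, lt_of_cheap⟩ := exists_equiv_fin_lt_of_forall_not_transGen
    (r := Function.swap fun x x' => x ≠ x' ∧ A x x' < mlc A)
    fun x h => not_transGen_ne_and_lt_mlc hA x (Relation.transGen_swap.1 h)
  refine ⟨φ, φ.bijective, fun x x' => ?_⟩
  rcases eq_or_ne x x' with rfl | hne
  · simpa [canonDissim] using hA x x
  rw [canonDissim, if_neg (φ.injective.ne hne)]
  split_ifs with hlt
  · exact hαsep.trans (sep_le hA hne)
  · by_contra! hcheap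
    exact hlt (lt_of_cheap x' x ⟨hne, hcheap⟩)

/-- Every network with `n ≥ 2` nodes admits a bijective dissimilarity-reducing
map into the canonical network `Δ_n(α, β)` with `β = mlc(X, A_X)` and `0 < α ≤ sep(X, A_X)`. -/
theorem exists_bijective_dissimilarity_reducing_to_canonical
    (X : Type) [Fintype X] (A : X → X → ℝ) (hA : IsDissim A)
    (hn : 2 ≤ Fintype.card X)
    (α : ℝ) (hα : 0 < α) (hαsep : α ≤ sep A) :
    ∃ φ : X → Fin (Fintype.card X), Function.Bijective φ ∧
      ∀ x x' : X, canonDissim (Fintype.card X) α (mlc A) (φ x) (φ x') ≤ A x x' :=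
  exists_bijective_dissimilarity_reducing_to_canonical_general hA.1 hαsep
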